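/- arXiv:2211.04523 — 2 statements merged into one kernel-verified Lean document; each statement's English description precedes it below -/
import Mathlib

section
/- Let Λ ⊂ ℝ^d be a lattice and B = [−b₁,b₁] × ⋯ × [−b_d,b_d] with all b_i > 0. Let σ be a permutation with b_{σ(1)} ≥ ⋯ ≥ b_{σ(d)}, and suppose the ℝ-span of Λ ∩ B has dimension r ≤ d. Then there is a constant C depending only on d such that #(Λ ∩ B) ≤ C·(1 + b_{σ(1)}⋯b_{σ(r)}/λ_r), where λ_r is the first minimum of the r-th exterior power lattice ⋀^r Λ with respect to the sup-norm. -/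
/-!
Let `F = Λ ∩ B`, and let `u` be a `ℤ`-basis of the lattice `M` generated by `F`; it has `r`
elements because `M` is discrete. Choose `v₁, …, v_r ∈ F` maximizing `|D|`, where `D` is the
determinant of `v` with respect to `u`.

By Cramer's rule every `x ∈ F` is a combination of the `v i` with coefficients in `[-1, 1]`. Hence
each of the `|D|` cosets of `⟨v₁, …, v_r⟩` in `M` contains at most `3 ^ r` elements of `F`, so
`#F ≤ 3 ^ r |D|` (`card_le_three_pow_mul_det`). This replaces the volume arguments of Blichfeldt and
Minkowski.

On the other hand `v₁ ∧ ⋯ ∧ v_r = D • (u₁ ∧ ⋯ ∧ u_r)`, and `u₁ ∧ ⋯ ∧ u_r` is a nonzero element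
of `⋀^r Λ`, so `|D| λ_r ≤ ‖v₁ ∧ ⋯ ∧ v_r‖ ≤ r! b_{σ(1)} ⋯ b_{σ(r)}` by expanding the minors. As
`λ_r > 0` (`extFirstMin_pos`), dividing gives the bound with `C = 3 ^ d d!`.
-/

/-- The coordinates (Plücker coordinates) of the wedge product `v 0 ∧ ⋯ ∧ v (r-1)` of
`r` vectors in `ℝ^d`, indexed by the `r`-element subsets of `Fin d`. -/
noncomputable def wedgeCoord (d r : ℕ) (v : Fin r → (Fin d → ℝ)) :
    {s : Finset (Fin d) // s.card = r} → ℝ :=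
  fun s => Matrix.det (Matrix.of fun i j => v i (s.1.orderEmbOfFin s.2 j))

/-- The `r`-th exterior power of a lattice `L ⊆ ℝ^d`: the `ℤ`-span of the wedges of
`r`-tuples of lattice vectors, viewed inside `ℝ^(d choose r)` via Plücker coordinates. -/
noncomputable def extPowerLattice (d r : ℕ) (L : Set (Fin d → ℝ)) :
    Submodule ℤ ({s : Finset (Fin d) // s.card = r} → ℝ) :=
  Submodule.span ℤ {w | ∃ v : Fin r → (Fin d → ℝ), (∀ i, v i ∈ L) ∧ w = wedgeCoord d r v}

/-- The first minimum (with respect to the sup-norm) of the `r`-th exterior power of the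
lattice `L`. -/
noncomputable def extFirstMin (d r : ℕ) (L : Set (Fin d → ℝ)) : ℝ :=
  sInf {c : ℝ | ∃ w ∈ extPowerLattice d r L, w ≠ 0 ∧ c = ‖w‖}

/-- Universal property of the Plücker coordinates, a form of the Cauchy–Binet formula: every
alternating map on `r`-tuples in `ℝ^d` is a linear function of `wedgeCoord`. -/
lemma alternating_factors_wedge {d r : ℕ} {N : Type*} [AddCommGroup N] [Module ℝ N]
    (f : (Fin d → ℝ) [⋀^Fin r]→ₗ[ℝ] N) :
    ∃ T : ({s : Finset (Fin d) // s.card = r} → ℝ) →ₗ[ℝ] N,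
      ∀ v : Fin r → (Fin d → ℝ), T (wedgeCoord d r v) = f v := by
  classical
  let e := (Pi.basisFun ℝ (Fin d)).exteriorPower r
  let F := exteriorPower.alternatingMapLinearEquiv f
  refine ⟨F ∘ₗ e.equivFun.symm.toLinearMap, fun v => ?_⟩
  have h : e.equivFun (exteriorPower.ιMulti ℝ r v) = wedgeCoord d r v := by
    funext s
    rw [Module.Basis.equivFun_apply, exteriorPower.basis_repr_apply,
      exteriorPower.ιMultiDual_apply_ιMulti]
    rfl
  rw [← h]
  change F (e.equivFun.symm (e.equivFun _)) = _
  rw [LinearEquiv.symm_apply_apply]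
  exact exteriorPower.alternatingMapLinearEquiv_apply_ιMulti f v

/-- `T` and `S` are the `r`-th compounds of `P` and `Q`. That `S` inverts `T` is stated on wedges
only, which generate the exterior power lattice. -/
lemma exists_wedge_comp_inverse {d : ℕ} (r : ℕ) (P Q : (Fin d → ℝ) →ₗ[ℝ] (Fin d → ℝ))
    (hQP : Q ∘ₗ P = LinearMap.id) :
    ∃ T S : ({s : Finset (Fin d) // s.card = r} → ℝ) →ₗ[ℝ]
        ({s : Finset (Fin d) // s.card = r} → ℝ),
      (∀ v, T (wedgeCoord d r v) = wedgeCoord d r (fun i => P (v i))) ∧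
      (∀ v, S (T (wedgeCoord d r v)) = wedgeCoord d r v) := by
  let W : (Fin d → ℝ) [⋀^Fin r]→ₗ[ℝ] ({s : Finset (Fin d) // s.card = r} → ℝ) :=
    AlternatingMap.pi fun s => Matrix.detRowAlternating.compLinearMap
      (LinearMap.funLeft ℝ ℝ (s.1.orderEmbOfFin s.2))
  have hW : ∀ v, W v = wedgeCoord d r v := fun v => rfl
  obtain ⟨T, hT⟩ := alternating_factors_wedge (W.compLinearMap P)
  obtain ⟨S, hS⟩ := alternating_factors_wedge (W.compLinearMap Q)
  have hT' : ∀ v, T (wedgeCoord d r v) = wedgeCoord d r (fun i => P (v i)) := fun v => by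
    rw [hT]; rfl
  refine ⟨T, S, hT', fun v => ?_⟩
  rw [hT', hS]
  have : (fun i => Q (P (v i))) = v := funext fun i => LinearMap.congr_fun hQP (v i)
  conv_rhs => rw [← this]
  rfl

/-- If `P` is a left inverse of `u`, the alternating form `det ∘ P` takes the value `1` at `u`;
it factors through the wedge, which is therefore nonzero. -/
lemma wedgeCoord_ne_zero {d r : ℕ} {u : Fin r → (Fin d → ℝ)} (hu : LinearIndependent ℝ u) :
    wedgeCoord d r u ≠ 0 := by
  intro h0
  obtain ⟨P, hP⟩ := LinearMap.exists_leftInverse_of_injective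
    (Fintype.linearCombination ℝ u) (LinearMap.ker_eq_bot.2
      (linearIndependent_iff_injective_fintypeLinearCombination.1 hu))
  obtain ⟨T, hT⟩ := alternating_factors_wedge
    ((Pi.basisFun ℝ (Fin r)).det.compLinearMap P)
  have h1 := hT u
  have h2 : (fun i => P (u i)) = Pi.basisFun ℝ (Fin r) := by
    funext i
    have := LinearMap.congr_fun hP (Pi.single i 1)
    simpa using this
  have h3 : ((Pi.basisFun ℝ (Fin r)).det.compLinearMap P) u = 1 := by
    rw [AlternatingMap.compLinearMap_apply]
    exact (congrArg _ h2).trans (Module.Basis.det_self _)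
  rw [h0, map_zero, h3] at h1
  exact zero_ne_one h1

/-- The exterior power lattice is uniformly discrete: the compound of `g⁻¹` maps it injectively to
integer vectors, whose nonzero elements have norm at least `1`. -/
lemma extFirstMin_pos {d r : ℕ} {g : Matrix (Fin d) (Fin d) ℝ} (hg : IsUnit g.det)
    {L : Set (Fin d → ℝ)} (hL : L = {v | ∃ x : Fin d → ℤ, v = g.mulVec (fun i => (x i : ℝ))})
    (hne : ∃ w ∈ extPowerLattice d r L, w ≠ 0) : 0 < extFirstMin d r L := by
  classical
  obtain ⟨T, S, hT, hST⟩ := exists_wedge_comp_inverse r (Matrix.mulVecLin g⁻¹) (Matrix.mulVecLin g)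
    (by rw [← Matrix.mulVecLin_mul, Matrix.mul_nonsing_inv g hg, Matrix.mulVecLin_one])
  have hS : ∀ w ∈ extPowerLattice d r L, S (T w) = w := by
    intro w hw
    induction hw using Submodule.span_induction with
    | mem x hx => obtain ⟨v, -, rfl⟩ := hx; exact hST v
    | zero => simp
    | add x y _ _ hx hy => rw [map_add, map_add, hx, hy]
    | smul a x _ hx => rw [map_zsmul, map_zsmul, hx]
  have hint : ∀ w ∈ extPowerLattice d r L, ∀ s, ∃ n : ℤ, T w s = n := by
    intro w hw
    induction hw using Submodule.span_induction with
    | mem x hx =>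
      obtain ⟨v, hv, rfl⟩ := hx
      intro s
      have hx : ∀ i, ∃ x : Fin d → ℤ, g⁻¹.mulVec (v i) = fun j => (x j : ℝ) := by
        intro i
        have := hv i
        rw [hL] at this
        obtain ⟨x, hx⟩ := this
        exact ⟨x, by rw [hx, Matrix.mulVec_mulVec, Matrix.nonsing_inv_mul g hg, Matrix.one_mulVec]⟩
      choose x hx using hx
      refine ⟨(Matrix.of fun i j => x i (s.1.orderEmbOfFin s.2 j)).det, ?_⟩
      rw [hT, Int.cast_det]
      simp only [wedgeCoord, Matrix.mulVecLin_apply, hx]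
      rfl
    | zero => exact fun s => ⟨0, by simp⟩
    | add x y _ _ hx hy =>
      intro s
      obtain ⟨m, hm⟩ := hx s
      obtain ⟨n, hn⟩ := hy s
      exact ⟨m + n, by rw [map_add, Pi.add_apply, hm, hn]; push_cast; rfl⟩
    | smul a x _ hx =>
      intro s
      obtain ⟨m, hm⟩ := hx s
      exact ⟨a * m, by rw [map_zsmul, Pi.smul_apply, hm]; simp⟩
  let T' := LinearMap.toContinuousLinearMap T
  have hbound : ∀ w ∈ extPowerLattice d r L, w ≠ 0 → (‖T'‖ + 1)⁻¹ ≤ ‖w‖ := by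
    intro w hw hw0
    have hTw : T w ≠ 0 := fun h => hw0 (by rw [← hS w hw, h, map_zero])
    obtain ⟨s, hs⟩ := Function.ne_iff.1 hTw
    obtain ⟨n, hn⟩ := hint w hw s
    have hn0 : n ≠ 0 := by rintro rfl; exact hs (by simpa using hn)
    have h1 : (1 : ℝ) ≤ ‖T w s‖ := by
      rw [hn, Real.norm_eq_abs]
      exact_mod_cast Int.one_le_abs hn0
    have h2 : ‖T w‖ ≤ ‖T'‖ * ‖w‖ := T'.le_opNorm w
    have h3 := norm_le_pi_norm (T w) s
    rw [inv_le_iff_one_le_mul₀ (by positivity)]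
    nlinarith [norm_nonneg w]
  have hpos : (0 : ℝ) < (‖T'‖ + 1)⁻¹ := by positivity
  refine hpos.trans_le (le_csInf ?_ ?_)
  · obtain ⟨w, hw, hw0⟩ := hne
    exact ⟨_, w, hw, hw0, rfl⟩
  · rintro c ⟨w, hw, hw0, rfl⟩
    exact hbound w hw hw0

/-- The counting step. Take `v` in `F` maximizing `|D|`, `D = det v`. The Cramer numerators `k i x`
of `x ∈ F` satisfy `|k i x| ≤ |D|`, so each Euclidean quotient `k i x / D` lies in `{-1, 0, 1}`;
these quotients together with the class of `x` modulo the span of `v`, a subgroup of index `|D|`,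
determine `x`. -/
lemma card_le_three_pow_mul_det {M : Type*} [AddCommGroup M] {r : ℕ}
    (u : Module.Basis (Fin r) ℤ M) (F : Set M) (hfin : F.Finite)
    (hspan : Submodule.span ℤ F = ⊤) :
    ∃ v : Fin r → M, (∀ i, v i ∈ F) ∧ u.det v ≠ 0 ∧
      Nat.card F ≤ 3 ^ r * (u.det v).natAbs := by
  classical
  have hex : ∃ v : Fin r → F, u.det (fun i => (v i : M)) ≠ 0 := by
    by_contra! h
    -- A multilinear map vanishing on tuples from a spanning set is zero, but `u.det u = 1`.
    have h0 : u.det.toMultilinearMap = 0 :=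
      MultilinearMap.ext_of_span_eq_top (g := fun (_ : Fin r) (x : F) => (x : M))
        (fun _ => by rw [Subtype.range_coe]; exact hspan) (fun v => by simpa using h v)
    have h1 := congrArg (fun f => f u) h0
    simp [Module.Basis.det_self] at h1
  have := hfin.to_subtype
  obtain ⟨v₀, hv₀⟩ := hex
  have : Nonempty (Fin r → F) := ⟨v₀⟩
  obtain ⟨w, hw⟩ := Finite.exists_max fun v : Fin r → F => (u.det (fun i => (v i : M))).natAbs
  set v : Fin r → M := fun i => (w i : M) with hv
  have hD : u.det v ≠ 0 := by
    have := hw v₀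
    rw [← Int.natAbs_ne_zero] at hv₀ ⊢
    omega
  set D := u.det v with hDdef
  refine ⟨v, fun i => (w i).2, hD, ?_⟩
  let k : Fin r → M →ₗ[ℤ] ℤ := fun i => u.det.toMultilinearMap.toLinearMap v i
  have hk_apply : ∀ i x, k i x = u.det (Function.update v i x) := fun i x => rfl
  have hkle : ∀ i, ∀ x ∈ F, (k i x).natAbs ≤ D.natAbs := by
    intro i x hx
    have h := hw (Function.update w i ⟨x, hx⟩)
    have he : (fun j => ((Function.update w i ⟨x, hx⟩ : Fin r → F) j : M))
        = Function.update v i x := by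
      funext j
      by_cases hj : j = i
      · subst hj; simp
      · simp [hj, hv]
    rw [hk_apply, ← he]
    exact h
  have hkv : ∀ i j, k i (v j) = if j = i then D else 0 := by
    intro i j
    rw [hk_apply]
    split_ifs with hji
    · subst hji; rw [Function.update_eq_self]
    · refine u.det.map_eq_zero_of_eq _ (i := i) (j := j) ?_ (Ne.symm hji)
      simp [hji]
  have hksum : ∀ i (n : Fin r → ℤ), k i (∑ j, n j • v j) = n i * D := by
    intro i n
    simp [map_sum, hkv]
  -- Pairing with `k i` reads off the `i`-th coefficient, up to the nonzero factor `D`.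
  have hli : LinearIndependent ℤ v := by
    rw [Fintype.linearIndependent_iff]
    intro n hn i
    have := hksum i n
    rw [hn, map_zero] at this
    simpa [hD] using this.symm
  set N := Submodule.span ℤ (Set.range v) with hN
  have : Module.Free ℤ M := Module.Free.of_basis u
  have : Module.Finite ℤ M := Module.Finite.of_basis u
  have hcard : Nat.card (M ⧸ N) = D.natAbs := by
    rw [← Submodule.natAbs_det_basis_change u N (Module.Basis.span hli)]
    congr 2
    funext i
    exact congrArg Subtype.val (Module.Basis.span_apply hli i)
  have hdiv : ∀ i, ∀ x ∈ F, k i x / D ∈ Finset.Icc (-1 : ℤ) 1 := by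
    intro i x hx
    have h1 := hkle i x hx
    have h2 := Int.ediv_mul_add_emod (k i x) D
    have h3 := Int.emod_nonneg (k i x) hD
    have h4 := Int.emod_lt_abs (k i x) hD
    have h5 : |k i x| ≤ |D| := by
      rw [Int.abs_eq_natAbs, Int.abs_eq_natAbs]; exact_mod_cast h1
    rw [Finset.mem_Icc]
    have h6 := abs_le.1 h5
    rcases lt_or_gt_of_ne hD with hneg | hpos
    · rw [abs_of_neg hneg] at *
      constructor <;> nlinarith
    · rw [abs_of_pos hpos] at *
      constructor <;> nlinarith
  have hNfin : Finite (M ⧸ N) := Nat.finite_of_card_ne_zero (by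
    rw [hcard]; exact Int.natAbs_ne_zero.2 hD)
  let Φ : F → (Fin r → Finset.Icc (-1 : ℤ) 1) × (M ⧸ N) := fun x =>
    (fun i => ⟨k i x / D, hdiv i x x.2⟩, Submodule.Quotient.mk x)
  have hΦ : Function.Injective Φ := by
    intro x y hxy
    have h1 : ∀ i, k i x / D = k i y / D := fun i => by
      have := congrFun (congrArg Prod.fst hxy) i
      exact congrArg Subtype.val this
    have h2 : (x : M) - y ∈ N := (Submodule.Quotient.eq N).1 (congrArg Prod.snd hxy)
    obtain ⟨n, hn⟩ := (Submodule.mem_span_range_iff_exists_fun ℤ).1 h2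
    have h3 : ∀ i, n i = 0 := by
      intro i
      have h4 := hksum i n
      rw [hn, map_sub] at h4
      have h5 : k i x = k i y + n i * D := by linarith
      have h6 := h1 i
      rw [h5, Int.add_mul_ediv_right _ _ hD] at h6
      linarith
    have : (x : M) - y = 0 := by rw [← hn]; simp [h3]
    exact Subtype.ext (sub_eq_zero.1 this)
  have := Nat.card_le_card_of_injective Φ hΦ
  rw [Nat.card_prod, Nat.card_pi, hcard] at this
  simpa [-Finset.mem_Icc] using this

/-- Among products of `r` of the `b j`, the largest is that of the first `r` in the order `σ`. -/
lemma prod_le_prod_top {d r : ℕ} (hr : r ≤ d) (b : Fin d → ℝ) (hb : ∀ i, 0 < b i)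
    (σ : Equiv.Perm (Fin d)) (hσ : ∀ i j : Fin d, i ≤ j → b (σ j) ≤ b (σ i))
    (s : Finset (Fin d)) (hs : s.card = r) :
    ∏ j ∈ s, b j ≤ ∏ i : Fin r, b (σ (Fin.castLE hr i)) := by
  classical
  let t := s.map σ.symm.toEmbedding
  have ht : t.card = r := by rw [Finset.card_map, hs]
  have h1 : ∏ j ∈ s, b j = ∏ i : Fin r, b (σ (t.orderEmbOfFin ht i)) := by
    have h2 : ∏ j ∈ s, b j = ∏ j ∈ t, b (σ j) := by simp [t, Finset.prod_map]
    rw [h2]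
    conv_lhs => rw [← Finset.map_orderEmbOfFin_univ t ht]
    rw [Finset.prod_map]
    rfl
  rw [h1]
  refine Finset.prod_le_prod (fun i _ => (hb _).le) fun i _ => hσ _ _ ?_
  -- The `n`-th smallest element of a set of naturals is at least `n`.
  have h3 : ∀ n (hn : n < r), n ≤ (t.orderEmbOfFin ht ⟨n, hn⟩ : ℕ) := by
    intro n
    induction n with
    | zero => intro _; exact Nat.zero_le _
    | succ n ih =>
      intro hn
      have h4 := ih (by omega)
      have h5 : t.orderEmbOfFin ht ⟨n, by omega⟩ < t.orderEmbOfFin ht ⟨n + 1, hn⟩ :=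
        (t.orderEmbOfFin ht).strictMono (by simp [Fin.lt_def])
      rw [Fin.lt_def] at h5
      omega
  exact h3 i i.2

lemma norm_wedgeCoord_le {d r : ℕ} (hr : r ≤ d) (b : Fin d → ℝ) (hb : ∀ i, 0 < b i)
    (σ : Equiv.Perm (Fin d)) (hσ : ∀ i j : Fin d, i ≤ j → b (σ j) ≤ b (σ i))
    (v : Fin r → (Fin d → ℝ)) (hv : ∀ i j, |v i j| ≤ b j) :
    ‖wedgeCoord d r v‖ ≤ r.factorial * ∏ i : Fin r, b (σ (Fin.castLE hr i)) := by
  classical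
  rw [pi_norm_le_iff_of_nonneg
    (mul_nonneg (by positivity) (Finset.prod_nonneg fun i _ => (hb _).le))]
  intro s
  have hs : ∏ i : Fin r, b (s.1.orderEmbOfFin s.2 i) = ∏ j ∈ s.1, b j := by
    conv_rhs => rw [← Finset.map_orderEmbOfFin_univ s.1 s.2]
    rw [Finset.prod_map]
    rfl
  have hterm : ∀ π : Equiv.Perm (Fin r),
      |((Equiv.Perm.sign π : ℤ) : ℝ) * ∏ i, v (π i) (s.1.orderEmbOfFin s.2 i)|
        ≤ ∏ i : Fin r, b (σ (Fin.castLE hr i)) := by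
    intro π
    have hsign : |((Equiv.Perm.sign π : ℤ) : ℝ)| = 1 := by
      rcases Int.units_eq_one_or (Equiv.Perm.sign π) with h | h <;> simp [h]
    rw [abs_mul, hsign, one_mul, Finset.abs_prod]
    refine le_trans ?_ (prod_le_prod_top hr b hb σ hσ s.1 s.2)
    rw [← hs]
    exact Finset.prod_le_prod (fun _ _ => abs_nonneg _) fun i _ => hv _ _
  rw [Real.norm_eq_abs, wedgeCoord, Matrix.det_apply']
  refine (Finset.abs_sum_le_sum_abs _ _).trans ((Finset.sum_le_card_nsmul _ _ _
    fun π _ => hterm π).trans_eq ?_)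
  rw [Finset.card_univ, Fintype.card_perm, Fintype.card_fin, nsmul_eq_mul]

/-- A change of `ℤ`-frame multiplies the wedge by the determinant of the frame. -/
lemma wedgeCoord_eq_det_smul {d r : ℕ} {M : Submodule ℤ (Fin d → ℝ)}
    (u : Module.Basis (Fin r) ℤ M) (v : Fin r → M) :
    wedgeCoord d r (fun i => (v i : Fin d → ℝ))
      = (u.det v : ℝ) • wedgeCoord d r (fun i => (u i : Fin d → ℝ)) := by
  classical
  funext s
  rw [Pi.smul_apply, smul_eq_mul, Module.Basis.det_apply, Int.cast_det, ← Matrix.det_transpose]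
  simp only [wedgeCoord]
  rw [← Matrix.det_mul]
  congr 1
  ext i j
  have h := congrArg (fun x : M => (x : Fin d → ℝ) (s.1.orderEmbOfFin s.2 j)) (u.sum_repr (v i))
  simp only [Submodule.coe_sum, Finset.sum_apply, Submodule.coe_smul, Pi.smul_apply] at h
  simp only [Matrix.of_apply, Matrix.mul_apply, Matrix.transpose_apply, Matrix.map_apply,
    Module.Basis.toMatrix_apply]
  rw [← h]
  simp

/-- The `ℤ`-span of a set of lattice vectors lies in the `ℤ`-span of the columns of `g`, which
form a basis of `ℝ^d`. -/
lemma discrete_span_of_subset {d : ℕ} {g : Matrix (Fin d) (Fin d) ℝ} (hg : IsUnit g.det)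
    {L : Set (Fin d → ℝ)} (hL : L = {v | ∃ x : Fin d → ℤ, v = g.mulVec (fun i => (x i : ℝ))})
    {S : Set (Fin d → ℝ)} (hSL : S ⊆ L) : DiscreteTopology (Submodule.span ℤ S) := by
  have hli : LinearIndependent ℝ g.col :=
    Matrix.linearIndependent_cols_iff_isUnit.2 ((Matrix.isUnit_iff_isUnit_det g).2 hg)
  let e := basisOfLinearIndependentOfCardEqFinrank' g.col hli (by simp)
  have hle : Submodule.span ℤ S ≤ Submodule.span ℤ (Set.range e) := by
    rw [Submodule.span_le]
    intro v hv
    replace hv := hSL hv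
    rw [hL] at hv
    obtain ⟨x, rfl⟩ := hv
    refine (Submodule.mem_span_range_iff_exists_fun ℤ).2 ⟨x, ?_⟩
    funext i
    simp [e, Matrix.mulVec, dotProduct, mul_comm]
  exact DiscreteTopology.of_subset (s := (Submodule.span ℤ (Set.range e) : Set (Fin d → ℝ)))
    (inferInstanceAs (DiscreteTopology (Submodule.span ℤ (Set.range e)))) hle

lemma span_subset_lattice {d : ℕ} {g : Matrix (Fin d) (Fin d) ℝ}
    {L : Set (Fin d → ℝ)} (hL : L = {v | ∃ x : Fin d → ℤ, v = g.mulVec (fun i => (x i : ℝ))})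
    {S : Set (Fin d → ℝ)} (hSL : S ⊆ L) : ∀ x ∈ Submodule.span ℤ S, x ∈ L := by
  intro x hx
  induction hx using Submodule.span_induction with
  | mem x hx => exact hSL hx
  | zero => rw [hL]; exact ⟨0, by simp [← Pi.zero_def]⟩
  | add x y _ _ hx hy =>
    rw [hL] at *
    obtain ⟨a, rfl⟩ := hx
    obtain ⟨c, rfl⟩ := hy
    refine ⟨a + c, ?_⟩
    rw [← Matrix.mulVec_add]
    congr 1
    funext i
    simp
  | smul n x _ hx =>
    rw [hL] at *
    obtain ⟨a, rfl⟩ := hx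
    refine ⟨n • a, ?_⟩
    rw [← Matrix.mulVec_smul]
    congr 1
    funext i
    simp

/-- A `ℤ`-basis of `span ℤ S` is linearly independent over `ℝ` once its cardinality is the
dimension of the real span of `S`. -/
lemma linearIndependent_of_finrank_span {d r : ℕ} {S : Set (Fin d → ℝ)}
    (u : Module.Basis (Fin r) ℤ (Submodule.span ℤ S))
    (hrank : Module.finrank ℝ (Submodule.span ℝ S) = r) :
    LinearIndependent ℝ (fun i => (u i : Fin d → ℝ)) := by
  rw [linearIndependent_iff_card_le_finrank_span, Fintype.card_fin]
  conv_lhs => rw [← hrank]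
  refine Submodule.finrank_mono (Submodule.span_le.2 fun x hx => ?_)
  have h := congrArg (Subtype.val) (u.sum_repr (⟨x, Submodule.subset_span hx⟩ : Submodule.span ℤ S))
  rw [Submodule.coe_sum] at h
  simp only at h
  rw [← h]
  refine Submodule.sum_mem _ fun i _ => ?_
  rw [Submodule.coe_smul]
  exact zsmul_mem (Submodule.subset_span (Set.mem_range_self i)) _

/-- `card_le_three_pow_mul_det` for a finite set of vectors inside its own `ℤ`-span. -/
lemma exists_card_le_det {d r : ℕ} {S : Set (Fin d → ℝ)}
    (u : Module.Basis (Fin r) ℤ (Submodule.span ℤ S)) (hfin : S.Finite) :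
    ∃ v : Fin r → Submodule.span ℤ S, (∀ i, (v i : Fin d → ℝ) ∈ S) ∧
      Nat.card S ≤ 3 ^ r * (u.det v).natAbs := by
  let F : Set (Submodule.span ℤ S) := {x | (x : Fin d → ℝ) ∈ S}
  have hF : F.Finite := hfin.preimage Subtype.val_injective.injOn
  have hspan : Submodule.span ℤ F = ⊤ := Submodule.span_span_coe_preimage
  obtain ⟨v, hv, -, hcard⟩ := card_le_three_pow_mul_det u F hF hspan
  refine ⟨v, hv, ?_⟩
  rwa [← Nat.card_preimage_of_injective (s := S)
    (Subtype.val_injective (p := (· ∈ Submodule.span ℤ S)))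
    fun x hx => ⟨⟨x, Submodule.subset_span hx⟩, rfl⟩]

theorem stmt12 (d : ℕ) (hd : 0 < d) :
    ∃ C : ℝ, 0 < C ∧
      ∀ (g : Matrix (Fin d) (Fin d) ℝ), IsUnit g.det →
      ∀ (L : Set (Fin d → ℝ)),
        L = {v | ∃ x : Fin d → ℤ, v = g.mulVec (fun i => (x i : ℝ))} →
      ∀ (b : Fin d → ℝ), (∀ i, 0 < b i) →
      ∀ (σ : Equiv.Perm (Fin d)), (∀ i j : Fin d, i ≤ j → b (σ j) ≤ b (σ i)) →
      ∀ (B : Set (Fin d → ℝ)), B = {v | ∀ i, |v i| ≤ b i} →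
      ∀ (r : ℕ) (hr : r ≤ d),
        Module.finrank ℝ (Submodule.span ℝ (L ∩ B)) = r →
        (Nat.card ↥(L ∩ B) : ℝ)
          ≤ C * (1 + (∏ i : Fin r, b (σ (Fin.castLE hr i))) / extFirstMin d r L) := by
  classical
  refine ⟨3 ^ d * d.factorial, by positivity, ?_⟩
  intro g hg L hL b hb σ hσ B hB r hr hrank
  have hP0 : 0 ≤ ∏ i : Fin r, b (σ (Fin.castLE hr i)) := Finset.prod_nonneg fun i _ => (hb _).le
  set P := ∏ i : Fin r, b (σ (Fin.castLE hr i)) with hP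
  have hmin0 : 0 ≤ extFirstMin d r L :=
    Real.sInf_nonneg (by rintro c ⟨w, -, -, rfl⟩; exact norm_nonneg w)
  -- `Nat.card` of an infinite type is `0`, so finiteness of `L ∩ B` need not be proved.
  by_cases hfin : (L ∩ B).Finite
  swap
  · rw [Nat.card_eq_zero.2 (Or.inr (Set.infinite_coe_iff.2 hfin))]
    simp only [Nat.cast_zero]
    positivity
  set M := Submodule.span ℤ (L ∩ B) with hM
  have hdisc : DiscreteTopology M := discrete_span_of_subset hg hL Set.inter_subset_left
  have hrankZ : Module.finrank ℤ M = r := by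
    rw [← hrank]
    exact (Real.finrank_eq_int_finrank_of_discrete hdisc).symm
  obtain ⟨u⟩ : Nonempty (Module.Basis (Fin r) ℤ M) :=
    ⟨Module.finBasisOfFinrankEq ℤ M hrankZ⟩
  obtain ⟨v, hvF, hcard⟩ := exists_card_le_det u hfin
  have hu : LinearIndependent ℝ (fun i => (u i : Fin d → ℝ)) :=
    linearIndependent_of_finrank_span u hrank
  have hML : ∀ x ∈ M, x ∈ L := span_subset_lattice hL Set.inter_subset_left
  have hmem : wedgeCoord d r (fun i => (u i : Fin d → ℝ)) ∈ extPowerLattice d r L :=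
    Submodule.subset_span ⟨_, fun i => hML _ (u i).2, rfl⟩
  have hne := wedgeCoord_ne_zero hu
  have hpos : 0 < extFirstMin d r L := extFirstMin_pos hg hL ⟨_, hmem, hne⟩
  have hmin : extFirstMin d r L ≤ ‖wedgeCoord d r (fun i => (u i : Fin d → ℝ))‖ :=
    csInf_le ⟨0, by rintro c ⟨w, -, -, rfl⟩; exact norm_nonneg w⟩ ⟨_, hmem, hne, rfl⟩
  have hBle : ∀ x ∈ B, ∀ j, |x j| ≤ b j := by
    rw [hB]
    exact fun _ h => h
  have hnorm : ‖wedgeCoord d r (fun i => (v i : Fin d → ℝ))‖ ≤ r.factorial * P :=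
    norm_wedgeCoord_le hr b hb σ hσ _ fun i => hBle _ (hvF i).2
  rw [wedgeCoord_eq_det_smul u v, norm_smul, Real.norm_eq_abs] at hnorm
  have hDle : ((u.det v).natAbs : ℝ) ≤ r.factorial * (P / extFirstMin d r L) := by
    rw [← mul_div_assoc, le_div_iff₀ hpos, Nat.cast_natAbs, Int.cast_abs]
    exact (mul_le_mul_of_nonneg_left hmin (abs_nonneg _)).trans hnorm
  have hQ : 0 ≤ P / extFirstMin d r L := by positivity
  calc (Nat.card ↥(L ∩ B) : ℝ) ≤ 3 ^ r * ((u.det v).natAbs : ℝ) := by exact_mod_cast hcard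
    _ ≤ 3 ^ r * (r.factorial * (P / extFirstMin d r L)) := by gcongr
    _ = 3 ^ r * r.factorial * (P / extFirstMin d r L) := by ring
    _ ≤ 3 ^ d * d.factorial * (1 + P / extFirstMin d r L) := by
      gcongr
      · norm_num
      · linarith
end

section
/- Let Λ ⊂ ℝ^d be a full-rank lattice and Λ* := (g^{−1})^T ℤ^d its dual lattice, where Λ = g·ℤ^d. Let δ₁ ≤ ⋯ ≤ δ_d and δ₁* ≤ ⋯ ≤ δ_d* be the successive minima (sup-norm) of Λ and Λ* respectively. Then there exist constants c, C > 0 depending only on d such that c ≤ δ_i · δ*_{d+1−i} ≤ C for all i = 1,…,d. -/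
/-!
Lower bound. If `a` and `b` are admissible radii for `δ_i(L)` and `δ_{d+1-i}(L*)`, the spans of the
corresponding short vectors have dimensions adding up to more than `d`, so they are not orthogonal.
Hence some `u ∈ L` and `w ∈ L*` with `‖u‖ ≤ a`, `‖w‖ ≤ b` have a nonzero, thus at least `1` in
absolute value, integer pairing, and `1 ≤ d a b` (`one_le_mul_of_rank`).

Upper bound. Choose `v_1, …, v_d ∈ L` greedily, each `v_k` being within a factor `2` of the shortest
vectors of `L` outside the span of the previous ones (`exists_greedy_family`). Minkowski's convex
body theorem, after rescaling the Gram-Schmidt coordinates of the `v_k`, gives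
`∏ ‖v_k‖ ≤ (8d)^d |det g|` (`prod_norm_le`). The cofactor vectors `w_j` of `(v_k)`, divided by
`det g`, are independent elements of `L*` with
`‖w_j‖ ≤ d! ∏_{k ≠ j} ‖v_k‖ / |det g| ≤ d! (8d)^d / ‖v_j‖` (`exists_dual_family`). Since the
`‖v_k‖` increase up to a factor `2`, the vectors `v_1, …, v_i` give `δ_i ≤ 2 ‖v_i‖` and
`w_i, …, w_d` give `δ*_{d+1-i} ≤ 2 d! (8d)^d / ‖v_i‖`.
-/

/-- The `i`-th successive minimum (sup-norm) of a lattice `L ⊆ ℝ^d`: the least `δ > 0`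
such that `L ∩ [-δ, δ]^d` contains `i` linearly independent vectors. -/
noncomputable def succMin (d : ℕ) (L : Set (Fin d → ℝ)) (i : ℕ) : ℝ :=
  sInf {δ : ℝ | 0 < δ ∧
    i ≤ Module.finrank ℝ (Submodule.span ℝ (L ∩ {v | ∀ j, |v j| ≤ δ}))}

/-- The factor `2` replaces attainment of the infimum, so no discreteness of `S` is needed. -/
theorem exists_le_two_mul_of_pos {E : Type*} [SeminormedAddCommGroup E] {S : Set E} (hS : S.Nonempty)
    {c : ℝ} (hc : 0 < c) (h : ∀ u ∈ S, c ≤ ‖u‖) : ∃ v ∈ S, ∀ u ∈ S, ‖v‖ ≤ 2 * ‖u‖ := by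
  have hne : (norm '' S).Nonempty := hS.image _
  have hle : c ≤ sInf (norm '' S) := le_csInf hne (by rintro _ ⟨u, hu, rfl⟩; exact h u hu)
  obtain ⟨_, ⟨v, hv, rfl⟩, hlt⟩ :=
    exists_lt_of_csInf_lt hne (show sInf (norm '' S) < 2 * sInf (norm '' S) by linarith)
  refine ⟨v, hv, fun u hu => ?_⟩
  have : sInf (norm '' S) ≤ ‖u‖ :=
    csInf_le ⟨0, by rintro _ ⟨u, -, rfl⟩; exact norm_nonneg u⟩ ⟨u, hu, rfl⟩
  linarith

/-- A family that almost realises the successive minima: each `v k` is a shortest vector of `L`,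
up to a factor `2`, outside the span of the earlier ones. -/
theorem exists_greedy_family {d : ℕ} (L : Set (Fin d → ℝ)) (hspan : Submodule.span ℝ L = ⊤)
    {c : ℝ} (hc : 0 < c) (h : ∀ u ∈ L, u ≠ 0 → c ≤ ‖u‖) :
    ∃ v : Fin d → Fin d → ℝ, LinearIndependent ℝ v ∧ (∀ k, v k ∈ L) ∧
      ∀ k, ∀ u ∈ L, u ∉ Submodule.span ℝ (v '' Set.Iio k) → ‖v k‖ ≤ 2 * ‖u‖ := by
  have pick : ∀ W : Submodule ℝ (Fin d → ℝ), ∃ v : Fin d → ℝ, W ≠ ⊤ →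
      (v ∈ L ∧ v ∉ W ∧ ∀ u ∈ L, u ∉ W → ‖v‖ ≤ 2 * ‖u‖) := by
    intro W
    by_cases hW : W = ⊤
    · exact ⟨0, fun h => absurd hW h⟩
    have hne : {u | u ∈ L ∧ u ∉ W}.Nonempty := by
      by_contra hemp
      apply hW
      rw [eq_top_iff, ← hspan, Submodule.span_le]
      intro u hu
      by_contra hu'
      exact hemp ⟨u, hu, hu'⟩
    obtain ⟨v, hv, hv'⟩ := exists_le_two_mul_of_pos hne hc
      (fun u hu => h u hu.1 (by rintro rfl; exact hu.2 W.zero_mem))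
    exact ⟨v, fun _ => ⟨hv.1, hv.2, fun u h1 h2 => hv' u ⟨h1, h2⟩⟩⟩
  choose p hp using pick
  let W : ℕ → Submodule ℝ (Fin d → ℝ) := fun n => Nat.rec (motive := fun _ => Submodule ℝ (Fin d → ℝ)) ⊥ (fun _ V => V ⊔ Submodule.span ℝ {p V}) n
  have hW0 : W 0 = ⊥ := rfl
  have hWs : ∀ n, W (n + 1) = W n ⊔ Submodule.span ℝ {p (W n)} := fun n => rfl
  have hrank : ∀ n : ℕ, n ≤ d → Module.finrank ℝ ↥(W n) = n := by
    intro n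
    induction n with
    | zero => intro _; rw [hW0]; simp
    | succ n ih =>
      intro hn
      have hr := ih (by omega)
      have hne : W n ≠ ⊤ := by
        intro htop
        rw [htop] at hr
        simp at hr
        omega
      rw [hWs, Submodule.finrank_sup_span_singleton (hp _ hne).2.1, hr]
  have hspanW : ∀ n : ℕ, n ≤ d →
      Submodule.span ℝ ((fun k : Fin d => p (W k)) '' {k | (k : ℕ) < n}) = W n := by
    intro n
    induction n with
    | zero => intro _; rw [hW0]; simp
    | succ n ih =>
      intro hn
      have : {k : Fin d | (k : ℕ) < n + 1} = {k : Fin d | (k : ℕ) < n} ∪ {⟨n, by omega⟩} := by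
        ext k
        simp only [Set.mem_ofPred_eq, Set.mem_union, Set.mem_singleton_iff, Fin.ext_iff]
        omega
      rw [this, Set.image_union, Submodule.span_union, ih (by omega), Set.image_singleton, hWs]
  have hne : ∀ k : Fin d, W k ≠ ⊤ := by
    intro k htop
    have hr := hrank k k.2.le
    rw [htop] at hr
    simp at hr
    omega
  refine ⟨fun k => p (W k), ?_, fun k => (hp _ (hne k)).1, fun k u hu hu' => ?_⟩
  · apply linearIndependent_of_top_le_span_of_card_eq_finrank _ (by simp)
    have h1 := hspanW d le_rfl
    have h2 : {k : Fin d | (k : ℕ) < d} = Set.univ := by ext k; simp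
    rw [h2, Set.image_univ] at h1
    rw [h1, top_le_iff]
    apply Submodule.eq_top_of_finrank_eq
    rw [hrank d le_rfl]; simp
  · refine (hp _ (hne k)).2.2 u hu ?_
    rwa [← hspanW k k.2.le]

/-- Minkowski's linear forms theorem, from Minkowski's convex body theorem applied to the lattice
spanned by the columns of `M` and a cube. -/
theorem minkowski_linear_forms {d : ℕ} (M : Matrix (Fin d) (Fin d) ℝ) (hM : M.det ≠ 0)
    {r : ℝ} (hr : 0 ≤ r) (h : |M.det| < r ^ d) :
    ∃ x : Fin d → ℤ, x ≠ 0 ∧ ‖M.mulVec (fun i => (x i : ℝ))‖ ≤ r := by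
  have hli : LinearIndependent ℝ M.transpose.row := by
    rw [Matrix.linearIndependent_rows_iff_isUnit, Matrix.isUnit_iff_isUnit_det,
      Matrix.det_transpose]
    exact hM.isUnit
  let b : Module.Basis (Fin d) ℝ (Fin d → ℝ) := Module.Basis.mk hli
    (hli.span_eq_top_of_card_eq_finrank' (by simp)).ge
  have hb : ⇑b = M.transpose.row := Module.Basis.coe_mk _ _
  have hvol : MeasureTheory.volume (ZSpan.fundamentalDomain b) = ENNReal.ofReal |M.det| := by
    rw [ZSpan.volume_fundamentalDomain, hb, ← Matrix.det_transpose M]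
    rfl
  have : Countable (Submodule.span ℤ (Set.range b)).toAddSubgroup :=
    inferInstanceAs (Countable (Submodule.span ℤ (Set.range b)))
  obtain ⟨⟨u, hu⟩, hu0, hus⟩ :=
    MeasureTheory.exists_ne_zero_mem_lattice_of_measure_mul_two_pow_lt_measure
    (L := (Submodule.span ℤ (Set.range b)).toAddSubgroup)
    (s := Metric.closedBall (0 : Fin d → ℝ) r)
    (ZSpan.isAddFundamentalDomain b MeasureTheory.volume)
    (by simp) (convex_closedBall _ _) (by
      rw [hvol, Real.volume_pi_closedBall _ hr]
      simp only [Module.finrank_fintype_fun_eq_card, Fintype.card_fin]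
      rw [show (2 : ENNReal) = ENNReal.ofReal 2 by simp, ← ENNReal.ofReal_pow (by norm_num),
        ← ENNReal.ofReal_mul (abs_nonneg _), mul_pow, mul_comm]
      have h2 : (0 : ℝ) < 2 ^ d := by positivity
      have hpos : 0 < r ^ d := lt_of_le_of_lt (abs_nonneg _) h
      rw [ENNReal.ofReal_lt_ofReal_iff (by positivity)]
      exact mul_lt_mul_of_pos_left h h2)
  have hu' : u ∈ Submodule.span ℤ (Set.range b) := hu
  rw [Submodule.mem_span_range_iff_exists_fun] at hu'
  obtain ⟨x, hx⟩ := hu'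
  have hux : M.mulVec (fun i => (x i : ℝ)) = u := by
    rw [← hx, hb]
    ext l
    simp [Matrix.mulVec, dotProduct, Matrix.row, mul_comm]
  refine ⟨x, ?_, ?_⟩
  · rintro rfl
    apply hu0
    ext l
    simp [← hux, Matrix.mulVec, dotProduct]
  · rw [hux]
    simpa using hus

/-- Gram-Schmidt in coordinates: an orthogonal matrix `Q` (its rows are the Gram-Schmidt basis)
which brings the family `v` to triangular form. -/
theorem exists_triangularization {d : ℕ} (v : Fin d → Fin d → ℝ) :
    ∃ Q : Matrix (Fin d) (Fin d) ℝ, Q.transpose * Q = 1 ∧ (∀ i j, |Q i j| ≤ 1) ∧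
      ∀ i j, i < j → Q.mulVec (v i) j = 0 := by
  let f : Fin d → EuclideanSpace ℝ (Fin d) := fun k => WithLp.toLp 2 (v k)
  let e := InnerProductSpace.gramSchmidtOrthonormalBasis (𝕜 := ℝ) (by simp) f
  refine ⟨Matrix.of fun j l => e j l, ?_, fun i j => ?_, fun i j hij => ?_⟩
  · rw [mul_eq_one_comm]
    ext i j
    have := orthonormal_iff_ite.1 e.orthonormal i j
    rw [PiLp.inner_apply] at this
    simp only [Matrix.mul_apply, Matrix.of_apply, Matrix.transpose_apply, Matrix.one_apply]
    rw [← this]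
    exact Finset.sum_congr rfl fun l _ => by simp [mul_comm]
  · have := PiLp.norm_apply_le (e i) j
    rw [e.orthonormal.1 i] at this
    simpa using this
  · have := InnerProductSpace.gramSchmidtOrthonormalBasis_inv_triangular (𝕜 := ℝ) (by simp) f hij
    rw [PiLp.inner_apply] at this
    rw [← this]
    simp only [Matrix.mulVec, dotProduct, Matrix.of_apply]
    exact Finset.sum_congr rfl fun l _ => by simp [mul_comm, e, f]

/-- The nontrivial half of Minkowski's second theorem, for a greedy family `v`, with a crude
constant. The linear map `D * Q` divides the `k`-th Gram-Schmidt coordinate by `‖v k‖`; by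
minimality of the `v k` it sends no nonzero lattice vector to a very short vector, so Minkowski's
first theorem bounds the covolume `|det g| / ∏ ‖v k‖` of the image lattice from below. -/
theorem prod_norm_le {d : ℕ} (hd : 0 < d) (g : Matrix (Fin d) (Fin d) ℝ) (hg : g.det ≠ 0)
    (v : Fin d → Fin d → ℝ) (hv : LinearIndependent ℝ v)
    (hmono : ∀ j k, j ≤ k → ‖v j‖ ≤ 2 * ‖v k‖)
    (hmin : ∀ k, ∀ x : Fin d → ℤ,
      g.mulVec (fun i => (x i : ℝ)) ∉ Submodule.span ℝ (v '' Set.Iio k) →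
        ‖v k‖ ≤ 2 * ‖g.mulVec (fun i => (x i : ℝ))‖) :
    ∏ k, ‖v k‖ ≤ (8 * d) ^ d * |g.det| := by
  by_contra! hcon
  have hd' : (0 : ℝ) < d := by exact_mod_cast hd
  have hpos : ∀ k, 0 < ‖v k‖ := fun k => norm_pos_iff.2 (hv.ne_zero k)
  have hprod : 0 < ∏ k, ‖v k‖ := Finset.prod_pos fun k _ => hpos k
  obtain ⟨Q, hQ, hQ1, hQv⟩ := exists_triangularization v
  have hQdet : |Q.det| = 1 := by
    have := congrArg Matrix.det hQ
    rw [Matrix.det_mul, Matrix.det_transpose, Matrix.det_one] at this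
    rcases mul_self_eq_one_iff.1 this with h | h <;> simp [h]
  let D : Matrix (Fin d) (Fin d) ℝ := Matrix.diagonal fun k => ‖v k‖⁻¹
  have hdet : |(D * Q * g).det| = (∏ k, ‖v k‖)⁻¹ * |g.det| := by
    rw [Matrix.det_mul, Matrix.det_mul, abs_mul, abs_mul, hQdet, mul_one, Matrix.det_diagonal,
      Finset.prod_inv_distrib, abs_of_pos (inv_pos.2 hprod)]
  have hne : (D * Q * g).det ≠ 0 := by
    rw [← abs_pos, hdet]
    exact mul_pos (inv_pos.2 hprod) (abs_pos.2 hg)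
  obtain ⟨x, hx0, hx⟩ := minkowski_linear_forms (D * Q * g) hne (r := (8 * (d : ℝ))⁻¹) (by positivity) (by
    rw [hdet, inv_mul_lt_iff₀ hprod, inv_pow, ← div_eq_mul_inv, lt_div_iff₀ (by positivity),
      mul_comm]
    exact hcon)
  set u := g.mulVec (fun i => (x i : ℝ)) with hu
  have hy : ∀ j, |Q.mulVec u j| ≤ (8 * (d : ℝ))⁻¹ * ‖v j‖ := by
    intro j
    have h1 := (norm_le_pi_norm _ j).trans hx
    rw [← Matrix.mulVec_mulVec, ← Matrix.mulVec_mulVec, ← hu, Matrix.mulVec_diagonal,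
      Real.norm_eq_abs, abs_mul, abs_of_pos (inv_pos.2 (hpos j)), inv_mul_le_iff₀ (hpos j)] at h1
    linarith
  have hu0 : u ≠ 0 := by
    intro h0
    apply hx0
    have := Matrix.eq_zero_of_mulVec_eq_zero hg h0
    ext i
    simpa using congrFun this i
  -- the index `k` below is the level of `u` in the flag spanned by the family `v`
  let b : Module.Basis (Fin d) ℝ (Fin d → ℝ) := Module.Basis.mk hv
    (hv.span_eq_top_of_card_eq_finrank' (by simp)).ge
  have hb : ⇑b = v := Module.Basis.coe_mk _ _
  have hsupp : (b.repr u).support.Nonempty := by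
    rw [Finsupp.support_nonempty_iff]
    simpa using hu0
  let k := (b.repr u).support.max' hsupp
  have hk1 : u ∈ Submodule.span ℝ (v '' Set.Iic k) := by
    rw [← hb, b.mem_span_image]
    intro j hj
    exact Finset.le_max' _ j hj
  have hk2 : u ∉ Submodule.span ℝ (v '' Set.Iio k) := by
    rw [← hb, b.mem_span_image]
    intro hsub
    exact lt_irrefl k (hsub (Finset.max'_mem _ hsupp))
  have hge := hmin k x hk2
  have hyk : ∀ j, k < j → Q.mulVec u j = 0 := by
    intro j hj
    have hle : Submodule.span ℝ (v '' Set.Iic k) ≤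
        LinearMap.ker ((LinearMap.proj j).comp (Matrix.mulVecLin Q)) := by
      rw [Submodule.span_le]
      rintro _ ⟨i, hi, rfl⟩
      simpa using hQv i j (lt_of_le_of_lt hi hj)
    simpa using hle hk1
  have hyb : ∀ j, |Q.mulVec u j| ≤ (8 * (d : ℝ))⁻¹ * (2 * ‖v k‖) := by
    intro j
    rcases le_or_gt j k with hjk | hjk
    · refine (hy j).trans (mul_le_mul_of_nonneg_left ?_ (by positivity))
      exact hmono j k hjk
    · rw [hyk j hjk, abs_zero]; positivity
  have hub : ‖u‖ ≤ ‖v k‖ / 4 := by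
    rw [pi_norm_le_iff_of_nonneg (by positivity)]
    intro l
    have h1 : u = Q.transpose.mulVec (Q.mulVec u) := by
      rw [Matrix.mulVec_mulVec, hQ, Matrix.one_mulVec]
    rw [h1, Real.norm_eq_abs]
    calc |Q.transpose.mulVec (Q.mulVec u) l| ≤ ∑ j, |Q j l * Q.mulVec u j| :=
          Finset.abs_sum_le_sum_abs (fun j => Q j l * Q.mulVec u j) Finset.univ
      _ ≤ ∑ j : Fin d, (8 * (d : ℝ))⁻¹ * (2 * ‖v k‖) := by
          refine Finset.sum_le_sum fun j _ => ?_
          rw [abs_mul]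
          exact (mul_le_of_le_one_left (abs_nonneg _) (hQ1 j l)).trans (hyb j)
      _ = ‖v k‖ / 4 := by
          simp
          field_simp
          ring
  linarith [hpos k]

/-- A crude Hadamard bound, from the Leibniz formula. -/
theorem abs_det_le_prod {d : ℕ} (A : Matrix (Fin d) (Fin d) ℝ) (b : Fin d → ℝ)
    (h : ∀ i j, |A i j| ≤ b i) : |A.det| ≤ d.factorial * ∏ i, b i := by
  rw [← Matrix.det_transpose, Matrix.det_apply]
  refine (Finset.abs_sum_le_sum_abs _ _).trans ?_
  have : ∀ σ ∈ (Finset.univ : Finset (Equiv.Perm (Fin d))),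
      |Equiv.Perm.sign σ • ∏ i, A.transpose (σ i) i| ≤ ∏ i, b i := by
    intro σ _
    have h1 : |Equiv.Perm.sign σ • ∏ i, A.transpose (σ i) i| = ∏ i, |A i (σ i)| := by
      rw [← Finset.abs_prod]
      rcases Int.units_eq_one_or (Equiv.Perm.sign σ) with hs | hs <;> simp [hs]
    rw [h1]
    exact Finset.prod_le_prod (fun _ _ => abs_nonneg _) fun i _ => h i _
  refine (Finset.sum_le_card_nsmul _ _ _ this).trans ?_
  simp [Fintype.card_perm]

/-- The `w j` are the vectors of cofactors of the matrix with rows `v k`, divided by `det g`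
(a multiple of the basis dual to `v`). They lie in the dual lattice because the adjugate of an
integer matrix is an integer matrix. -/
theorem exists_dual_family {d : ℕ} (g : Matrix (Fin d) (Fin d) ℝ) (hg : g.det ≠ 0)
    (v : Fin d → Fin d → ℝ) (hv : LinearIndependent ℝ v) (X : Fin d → Fin d → ℤ)
    (hX : ∀ k, v k = g.mulVec (fun i => (X k i : ℝ))) :
    ∃ w : Fin d → Fin d → ℝ, LinearIndependent ℝ w ∧
      (∀ j, ∃ x : Fin d → ℤ, w j = (Matrix.transpose g⁻¹).mulVec (fun i => (x i : ℝ))) ∧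
      ∀ j, ‖w j‖ * ‖v j‖ ≤ d.factorial * (∏ k, ‖v k‖) / |g.det| := by
  have hpos : ∀ k, 0 < ‖v k‖ := fun k => norm_pos_iff.2 (hv.ne_zero k)
  let A : Matrix (Fin d) (Fin d) ℝ := Matrix.of v
  let Y : Matrix (Fin d) (Fin d) ℤ := Matrix.of X
  have hA : A = Y.map (Int.cast : ℤ → ℝ) * g.transpose := by
    ext k l
    simp [A, Y, Matrix.mul_apply, hX, Matrix.mulVec, dotProduct, mul_comm]
  have hAu : IsUnit A := by
    rw [← Matrix.linearIndependent_rows_iff_isUnit]; exact hv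
  have hadj : g.det⁻¹ • A.adjugate = (g⁻¹).transpose * Y.adjugate.map (Int.cast : ℤ → ℝ) := by
    have h1 : Y.adjugate.map (Int.cast : ℤ → ℝ) = (Y.map (Int.cast : ℤ → ℝ)).adjugate :=
      RingHom.map_adjugate (Int.castRingHom ℝ) Y
    rw [hA, Matrix.adjugate_mul_distrib, h1, Matrix.transpose_nonsing_inv, Matrix.inv_def,
      Matrix.det_transpose, Ring.inverse_eq_inv', Matrix.smul_mul]
  refine ⟨(g.det⁻¹ • A.adjugate).transpose.row, ?_, fun j => ⟨fun i => Y.adjugate i j, ?_⟩,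
    fun j => ?_⟩
  · rw [Matrix.linearIndependent_rows_iff_isUnit, Matrix.isUnit_transpose,
      Matrix.isUnit_iff_isUnit_det, Matrix.det_smul, Matrix.det_adjugate]
    have := (Matrix.isUnit_iff_isUnit_det _).1 hAu
    exact ((inv_ne_zero hg).isUnit.pow _).mul (this.pow _)
  · rw [hadj]
    ext l
    simp [Matrix.mul_apply, Matrix.mulVec, dotProduct, Matrix.row]
  · rw [← le_div_iff₀ (hpos j), pi_norm_le_iff_of_nonneg (by positivity)]
    intro l
    have hdet : |A.adjugate l j| ≤ d.factorial * ((∏ k, ‖v k‖) / ‖v j‖) := by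
      rw [Matrix.adjugate_apply]
      have hb := abs_det_le_prod (A.updateRow j (Pi.single l 1))
        (Function.update (fun k => ‖v k‖) j 1) (by
          intro i m
          rcases eq_or_ne i j with rfl | hij
          · simp only [Matrix.updateRow_self, Function.update_self, Pi.single_apply]
            split_ifs <;> simp
          · rw [Matrix.updateRow_ne hij, Function.update_of_ne hij]
            exact norm_le_pi_norm (v i) m)
      rw [Finset.prod_update_of_mem (Finset.mem_univ j), one_mul] at hb
      refine hb.trans_eq ?_
      congr 1
      rw [eq_div_iff (hpos j).ne', mul_comm, ← Finset.erase_eq]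
      exact Finset.mul_prod_erase _ (fun k => ‖v k‖) (Finset.mem_univ j)
    simp only [Matrix.row, Matrix.transpose_apply, Matrix.smul_apply, smul_eq_mul,
      Real.norm_eq_abs, abs_mul, abs_inv]
    have hgp := abs_pos.2 hg
    calc |g.det|⁻¹ * |A.adjugate l j| ≤ |g.det|⁻¹ * (d.factorial * ((∏ k, ‖v k‖) / ‖v j‖)) := by
          gcongr
      _ = _ := by ring

theorem le_finrank_of_family {d : ℕ} {S : Set (Fin d → ℝ)} (w : Fin d → Fin d → ℝ)
    (hw : LinearIndependent ℝ w) (s : Finset (Fin d)) (h : ∀ j ∈ s, w j ∈ S) :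
    s.card ≤ Module.finrank ℝ (Submodule.span ℝ S) := by
  have hli : LinearIndependent ℝ (fun j : s => w j) := hw.comp _ Subtype.val_injective
  have h1 := finrank_span_eq_card hli
  rw [Fintype.card_coe] at h1
  rw [← h1]
  apply Submodule.finrank_mono
  apply Submodule.span_mono
  rintro _ ⟨⟨j, hj⟩, rfl⟩
  exact h j hj

/-- If short vectors of `L` and of `Lstar` span spaces of total dimension more than `d`, these
spaces are not orthogonal, so some pairing of generators is a nonzero integer. -/
theorem one_le_mul_of_rank {d : ℕ} (L Lstar : Set (Fin d → ℝ))
    (hint : ∀ u ∈ L, ∀ w ∈ Lstar, ∃ n : ℤ, u ⬝ᵥ w = n) {a b : ℝ} (ha : 0 < a)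
    (h : d < Module.finrank ℝ (Submodule.span ℝ (L ∩ {v | ∀ j, |v j| ≤ a})) +
      Module.finrank ℝ (Submodule.span ℝ (Lstar ∩ {v | ∀ j, |v j| ≤ b}))) :
    1 ≤ d * (a * b) := by
  have hex : ∃ u ∈ L ∩ {v | ∀ j, |v j| ≤ a}, ∃ w ∈ Lstar ∩ {v | ∀ j, |v j| ≤ b},
      u ⬝ᵥ w ≠ 0 := by
    by_contra! hcon
    set U := Submodule.span ℝ (L ∩ {v | ∀ j, |v j| ≤ a})
    set U' := Submodule.span ℝ (Lstar ∩ {v | ∀ j, |v j| ≤ b})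
    have hle : U'.map (dotProductEquiv ℝ (Fin d)).toLinearMap ≤ U.dualAnnihilator := by
      rw [Submodule.map_le_iff_le_comap, Submodule.span_le]
      intro w hw
      rw [SetLike.mem_coe, Submodule.mem_comap, Submodule.mem_dualAnnihilator]
      have : U ≤ LinearMap.ker (dotProductEquiv ℝ (Fin d) w) := by
        rw [Submodule.span_le]
        intro u hu
        have := hcon u hu w hw
        rw [dotProduct_comm] at this
        simpa using this
      intro u hu
      exact this hu
    have h1 := Submodule.finrank_mono hle
    rw [LinearEquiv.finrank_map_eq] at h1
    have h2 := Subspace.finrank_add_finrank_dualAnnihilator_eq U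
    rw [Module.finrank_fintype_fun_eq_card, Fintype.card_fin] at h2
    omega
  obtain ⟨u, ⟨huL, hua⟩, w, ⟨hwL, hwb⟩, hne⟩ := hex
  obtain ⟨n, hn⟩ := hint u huL w hwL
  have h1 : (1 : ℝ) ≤ |u ⬝ᵥ w| := by
    rw [hn] at hne ⊢
    exact_mod_cast Int.one_le_abs (by exact_mod_cast hne)
  refine h1.trans ((Finset.abs_sum_le_sum_abs _ _).trans ?_)
  calc ∑ j, |u j * w j| ≤ ∑ _j : Fin d, a * b := by
        refine Finset.sum_le_sum fun j _ => ?_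
        rw [abs_mul]
        exact mul_le_mul (hua j) (hwb j) (abs_nonneg _) ha.le
    _ = d * (a * b) := by simp

theorem le_sInf_mul_sInf {A B : Set ℝ} (hA : A.Nonempty) (hB : B.Nonempty) {c : ℝ} (hc : 0 < c)
    (hA0 : ∀ a ∈ A, 0 < a) (h : ∀ a ∈ A, ∀ b ∈ B, c ≤ a * b) : c ≤ sInf A * sInf B := by
  have h1 : ∀ a ∈ A, c / a ≤ sInf B := fun a ha => le_csInf hB fun b hb => by
    rw [div_le_iff₀ (hA0 a ha), mul_comm]; exact h a ha b hb
  obtain ⟨a₀, ha₀⟩ := hA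
  have hBpos : 0 < sInf B := lt_of_lt_of_le (div_pos hc (hA0 a₀ ha₀)) (h1 a₀ ha₀)
  rw [← div_le_iff₀ hBpos]
  refine le_csInf ⟨a₀, ha₀⟩ fun a ha => ?_
  have := h1 a ha
  rw [div_le_iff₀ (hA0 a ha)] at this
  rw [div_le_iff₀ hBpos]
  linarith

theorem stmt13 (d : ℕ) (hd : 0 < d) :
    ∃ c C : ℝ, 0 < c ∧ 0 < C ∧
      ∀ (g : Matrix (Fin d) (Fin d) ℝ), IsUnit g.det →
      ∀ (L Lstar : Set (Fin d → ℝ)),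
        L = {v | ∃ x : Fin d → ℤ, v = g.mulVec (fun i => (x i : ℝ))} →
        Lstar = {v | ∃ x : Fin d → ℤ, v = (Matrix.transpose g⁻¹).mulVec (fun i => (x i : ℝ))} →
      ∀ i : ℕ, 1 ≤ i → i ≤ d →
        c ≤ succMin d L i * succMin d Lstar (d + 1 - i) ∧
        succMin d L i * succMin d Lstar (d + 1 - i) ≤ C := by
  have hd' : (0 : ℝ) < d := by exact_mod_cast hd
  set K : ℝ := d.factorial * (8 * d) ^ d with hK
  have hKpos : 0 < K := by positivity
  refine ⟨(d : ℝ)⁻¹, 4 * K, by positivity, by positivity, ?_⟩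
  intro g hgu L Lstar hL hLs i hi1 hid
  have hg : g.det ≠ 0 := hgu.ne_zero
  -- non-zero vectors of `L` are bounded away from `0`
  obtain ⟨c, hc, hcL⟩ : ∃ c : ℝ, 0 < c ∧ ∀ u ∈ L, u ≠ 0 → c ≤ ‖u‖ := by
    let T := (Matrix.toLin' g⁻¹).toContinuousLinearMap
    refine ⟨(‖T‖ + 1)⁻¹, by positivity, ?_⟩
    rw [hL]
    rintro _ ⟨x, rfl⟩ hu
    have hx : ∃ l, x l ≠ 0 := by
      by_contra! h0
      apply hu
      ext l
      simp [h0, Matrix.mulVec, dotProduct]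
    obtain ⟨l, hl⟩ := hx
    have h1 : T (g.mulVec (fun i => (x i : ℝ))) = fun i => (x i : ℝ) := by
      simp [T, Matrix.mulVec_mulVec, Matrix.nonsing_inv_mul g hgu]
    have h2 := T.le_opNorm (g.mulVec (fun i => (x i : ℝ)))
    rw [h1] at h2
    have h3 : (1 : ℝ) ≤ ‖fun i => (x i : ℝ)‖ := by
      refine le_trans ?_ (norm_le_pi_norm _ l)
      rw [Real.norm_eq_abs]
      exact_mod_cast Int.one_le_abs hl
    rw [inv_le_iff_one_le_mul₀ (by positivity)]
    nlinarith [norm_nonneg (g.mulVec (fun i => (x i : ℝ)))]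
  have hspan : Submodule.span ℝ L = ⊤ := by
    have hcols : LinearIndependent ℝ g.transpose.row := by
      rw [Matrix.linearIndependent_rows_iff_isUnit, Matrix.isUnit_transpose,
        Matrix.isUnit_iff_isUnit_det]
      exact hgu
    rw [eq_top_iff, ← hcols.span_eq_top_of_card_eq_finrank' (by simp)]
    apply Submodule.span_mono
    rintro _ ⟨k, rfl⟩
    rw [hL]
    refine ⟨Pi.single k 1, ?_⟩
    ext l
    simp [Matrix.mulVec, dotProduct, Matrix.row, Pi.single_apply]
  obtain ⟨v, hv, hvL, hvmin⟩ := exists_greedy_family L hspan hc hcL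
  have hmono : ∀ j k, j ≤ k → ‖v j‖ ≤ 2 * ‖v k‖ := fun j k hjk =>
    hvmin j _ (hvL k) (hv.notMem_span_image (by simpa using hjk))
  have hvL' := hvL
  rw [hL] at hvL'
  choose X hX using hvL'
  have hpos : ∀ k, 0 < ‖v k‖ := fun k => norm_pos_iff.2 (hv.ne_zero k)
  have hprod := prod_norm_le hd g hg v hv hmono (fun k x hx => hvmin k _ (by rw [hL]; exact ⟨x, rfl⟩) hx)
  obtain ⟨w, hw, hwL, hwv⟩ := exists_dual_family g hg v hv X hX
  have hwv' : ∀ j, ‖w j‖ * ‖v j‖ ≤ K := by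
    intro j
    refine (hwv j).trans ?_
    rw [div_le_iff₀ (abs_pos.2 hg), hK, mul_assoc]
    gcongr
  let k : Fin d := ⟨i - 1, by omega⟩
  have hmemA : 2 * ‖v k‖ ∈ {δ : ℝ | 0 < δ ∧
      i ≤ Module.finrank ℝ (Submodule.span ℝ (L ∩ {v | ∀ j, |v j| ≤ δ}))} := by
    refine ⟨by linarith [hpos k], ?_⟩
    refine le_trans ?_ (le_finrank_of_family v hv (Finset.Iic k) ?_)
    · rw [Fin.card_Iic]; simp only [k]; omega
    · intro j hj
      exact ⟨hvL j, fun l => (norm_le_pi_norm (v j) l).trans (hmono j k (Finset.mem_Iic.1 hj))⟩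
  have hmemB : 2 * K / ‖v k‖ ∈ {δ : ℝ | 0 < δ ∧
      d + 1 - i ≤ Module.finrank ℝ (Submodule.span ℝ (Lstar ∩ {v | ∀ j, |v j| ≤ δ}))} := by
    refine ⟨div_pos (by positivity) (hpos k), ?_⟩
    refine le_trans ?_ (le_finrank_of_family w hw (Finset.Ici k) ?_)
    · rw [Fin.card_Ici]; simp only [k]; omega
    · intro j hj
      refine ⟨by rw [hLs]; exact hwL j, fun l => (norm_le_pi_norm (w j) l).trans ?_⟩
      rw [le_div_iff₀ (hpos k)]
      have h1 := hmono k j (Finset.mem_Ici.1 hj)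
      have h2 := hwv' j
      nlinarith [norm_nonneg (w j)]
  have hint : ∀ u ∈ L, ∀ z ∈ Lstar, ∃ n : ℤ, u ⬝ᵥ z = n := by
    rw [hL, hLs]
    rintro _ ⟨x, rfl⟩ _ ⟨y, rfl⟩
    refine ⟨∑ l, x l * y l, ?_⟩
    rw [Matrix.dotProduct_mulVec, Matrix.vecMul_transpose, Matrix.mulVec_mulVec,
      Matrix.nonsing_inv_mul g hgu, Matrix.one_mulVec]
    simp [dotProduct]
  have hlow : (d : ℝ)⁻¹ ≤ succMin d L i * succMin d Lstar (d + 1 - i) := by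
    refine le_sInf_mul_sInf ⟨_, hmemA⟩ ⟨_, hmemB⟩ (by positivity) (fun a ha => ha.1) ?_
    rintro a ⟨ha, har⟩ b ⟨hb, hbr⟩
    rw [inv_le_iff_one_le_mul₀' hd']
    exact one_le_mul_of_rank L Lstar hint ha (by omega)
  refine ⟨hlow, ?_⟩
  have hbdd : ∀ (M : Set (Fin d → ℝ)) (n : ℕ), BddBelow {δ : ℝ | 0 < δ ∧
      n ≤ Module.finrank ℝ (Submodule.span ℝ (M ∩ {v | ∀ j, |v j| ≤ δ}))} :=
    fun M n => ⟨0, fun δ hδ => hδ.1.le⟩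
  have hA : succMin d L i ≤ 2 * ‖v k‖ := csInf_le (hbdd _ _) hmemA
  have hB : succMin d Lstar (d + 1 - i) ≤ 2 * K / ‖v k‖ := csInf_le (hbdd _ _) hmemB
  have hB0 : 0 ≤ succMin d Lstar (d + 1 - i) := Real.sInf_nonneg fun δ hδ => hδ.1.le
  calc succMin d L i * succMin d Lstar (d + 1 - i)
      ≤ 2 * ‖v k‖ * (2 * K / ‖v k‖) := mul_le_mul hA hB hB0 (by linarith [hpos k])
    _ = 4 * K := by
        have := (hpos k).ne'
        field_simp
        ring
end
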